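/- Let p₀, q₀ ≥ 3 be integers with (p₀ − 2)(q₀ − 2) = 4 (i.e. (p₀,q₀) ∈ {(3,6),(4,4),(6,3)}). Consider natural numbers V, E, F, L, f, and finitely supported families (f_{•,k})_{k≥1}, (f′_{•,k})_{k≥1} of natural numbers, with f_• = Σ_k f_{•,k} and f′_• = Σ_k f′_{•,k}, satisfying: F = f + f_• + f′_•; 2E = p₀·V + L; 2E = q₀·f + Σ_k k·f_{•,k} + Σ_k (q₀ + k)·f′_{•,k}; Σ_k k·(f_{•,k} + f′_{•,k}) = L; and the Euler relation F − E + V = 1 (in ℤ). Then 2·f_• = L + 2; in particular L is even and f_• = L/2 + 1. -/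

import Mathlib

/-- Combinatorial core of the no-go theorem for the macroscopic loop operator `tr X^L`
in the dually weighted matrix model of flat JT gravity: for a planar graph built on a
regular flat tessellation pair `(p₀,q₀)` with `(p₀−2)(q₀−2) = 4`, the counting relations
and Euler's identity force `2 f_• = L + 2`, i.e. `L` is even and `f_• = L/2 + 1`. -/
theorem stmt_17 (p₀ q₀ : ℕ) (hp : 3 ≤ p₀) (hq : 3 ≤ q₀)
    (hpq : (p₀ - 2) * (q₀ - 2) = 4)
    (V E F L f : ℕ) (fb f'b : ℕ →₀ ℕ)
    (hfb0 : fb 0 = 0) (hf'b0 : f'b 0 = 0)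
    (fdot f'dot : ℕ)
    (hfdot : fdot = fb.sum fun _ m => m)
    (hf'dot : f'dot = f'b.sum fun _ m => m)
    (h1 : F = f + fdot + f'dot)
    (h2 : 2 * E = p₀ * V + L)
    (h3 : 2 * E = q₀ * f + (fb.sum fun k m => k * m) + f'b.sum fun k m => (q₀ + k) * m)
    (h4 : (fb.sum fun k m => k * m) + (f'b.sum fun k m => k * m) = L)
    (h5 : (F : ℤ) - E + V = 1) :
    2 * fdot = L + 2 := by
  have key : (f'b.sum fun k m => (q₀ + k) * m)
      = q₀ * f'dot + f'b.sum fun k m => k * m := by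
    rw [hf'dot]
    simp only [Finsupp.sum, Finset.mul_sum, add_mul, Finset.sum_add_distrib]
  rw [key] at h3
  generalize (fb.sum fun k m => k * m) = A at *
  generalize (f'b.sum fun k m => k * m) = B at *
  clear hfdot hf'dot key
  have hp6 : p₀ ≤ 6 := by
    have : p₀ - 2 ≤ 4 := Nat.le_of_dvd (by norm_num) ⟨_, hpq.symm⟩
    omega
  interval_cases p₀
  · obtain rfl : q₀ = 6 := by omega
    omega
  · obtain rfl : q₀ = 4 := by omega
    omega
  · omega
  · obtain rfl : q₀ = 3 := by omega
    omega
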